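/- Let n = 65537 and ζ = exp(2πi/65537), let H be the subgroup of fourth powers in the group of units of ZMod 65537 and η₀ = Σ_{a ∈ H} ζ^a the corresponding quartic Gaussian period. Then η₀ is real and η₀ = (A − √(A² + 16384))/2, where A = (−1 + √65537)/2. -/

import Mathlib

/-!
For an odd prime `p = t ^ 4 + 1` and a character `χ` of order four, let `g = g(χ)`, `h = g(χ⁻¹)`
and `r = g(χ ^ 2)` be the Gauss sums, so that `r ^ 2 = p`, `g h = p` and `g ^ 2 = J(χ, χ ^ 2) r`;
hence `(g + h) ^ 2 = 2 p + 2 Re J(χ, χ ^ 2) r`. The Jacobi sum lies in `ℤ[i]`, has norm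
`p = (t ^ 2) ^ 2 + 1` and is congruent to `-p` modulo `2 (1 - i)`, which forces
`Re J(χ, χ ^ 2) = -1`. As `4 η = -1 + r + g + h`, the period `η` is one of the four real numbers
`(-1 + r + d) / 4` with `r ^ 2 = p` and `d ^ 2 = 2 (p - r)`.

To decide which one it is for `p = 65537`, let `η n` be the sum of `ζ ^ (n a)` over the fourth
powers `a`. Every `η n` with `p ∤ n` is again one of the four numbers, so `∑ η n / n ^ 4` is
dominated by `η 1`. By the Fourier expansion of the fourth Bernoulli polynomial this series equals
`π ^ 4` times a rational number, computed from the integer `∑ (a (p - a)) ^ 2` over the fourth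
powers `a`. The resulting bound `-63 < η 1 < 7` excludes all candidates but one.
-/

open Finset

section PowerResidues

variable {F : Type*} [Field F] [Fintype F] [DecidableEq F]

/-- The nonzero `n`-th powers of a finite field, i.e. the subgroup `(Fˣ)ⁿ` viewed inside `F`. -/
def powerResidues (F : Type*) [Field F] [Fintype F] [DecidableEq F] (n : ℕ) : Finset F :=
  univ.image fun x : Fˣ => (x : F) ^ n

theorem zero_notMem_powerResidues (n : ℕ) : (0 : F) ∉ powerResidues F n := by
  simp [powerResidues]

theorem card_units_filter_pow_eq {n : ℕ} (hn : n ∣ Fintype.card F - 1) {a : F}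
    (ha : a ∈ powerResidues F n) : #{x : Fˣ | (x : F) ^ n = a} = n := by
  obtain ⟨y, -, rfl⟩ := mem_image.1 ha
  have hfiber : #{x : Fˣ | powMonoidHom n x = powMonoidHom n y}
      = #{x : Fˣ | powMonoidHom n x = 1} :=
    MonoidHom.card_fiber_eq_of_mem_range (powMonoidHom n : Fˣ →* Fˣ) ⟨y, rfl⟩ ⟨1, map_one _⟩
  have hker : Nat.card (powMonoidHom n : Fˣ →* Fˣ).ker = n := by
    rw [IsCyclic.card_powMonoidHom_ker, Nat.card_eq_fintype_card, Fintype.card_units,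
      Nat.gcd_eq_right hn]
  simp only [Nat.card_eq_fintype_card, Fintype.card_subtype, MonoidHom.mem_ker] at hker
  simp only [← Units.val_pow_eq_pow_val, Units.val_inj]
  exact hfiber.trans hker

theorem sum_units_comp_pow {M : Type*} [AddCommMonoid M] {n : ℕ} (hn : n ∣ Fintype.card F - 1)
    (f : F → M) : ∑ x : Fˣ, f ((x : F) ^ n) = n • ∑ a ∈ powerResidues F n, f a := by
  rw [sum_comp f, smul_sum]
  exact sum_congr rfl fun a ha => by rw [card_units_filter_pow_eq hn ha]

theorem mul_card_powerResidues {n : ℕ} (hn : n ∣ Fintype.card F - 1) :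
    n * #(powerResidues F n) = Fintype.card F - 1 := by
  rw [card_eq_sum_ones, ← smul_eq_mul, ← sum_units_comp_pow hn fun _ => 1, ← card_eq_sum_ones,
    card_univ, Fintype.card_units]

variable {R : Type*} [CommRing R]

theorem mulChar_apply_eq_one_iff_mem_powerResidues (χ : MulChar F R) (u : Fˣ) :
    χ u = 1 ↔ (u : F) ∈ powerResidues F (orderOf χ) := by
  constructor
  · intro h
    obtain ⟨g, hg⟩ := IsCyclic.exists_generator (α := Fˣ)
    obtain ⟨m, rfl⟩ := mem_powers_iff_mem_zpowers.2 (hg u)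
    have hχ : χ ^ m = 1 := (MulChar.eq_iff hg _ _).2 <| by
      rw [MulChar.pow_apply_coe, MulChar.one_apply_coe, ← map_pow, ← Units.val_pow_eq_pow_val, h]
    obtain ⟨k, rfl⟩ := orderOf_dvd_of_pow_eq_one hχ
    exact mem_image.2 ⟨g ^ k, mem_univ _, by
      rw [← Units.val_pow_eq_pow_val, ← pow_mul, mul_comm]⟩
  · intro h
    obtain ⟨x, -, hx⟩ := mem_image.1 h
    rw [← hx, map_pow, ← MulChar.pow_apply_coe, pow_orderOf_eq_one, MulChar.one_apply_coe]

variable [IsDomain R]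

theorem sum_mulChar_pow_apply (χ : MulChar F R) (a : F) :
    ∑ k ∈ range (orderOf χ), (χ ^ k) a
      = if a ∈ powerResidues F (orderOf χ) then (orderOf χ : R) else 0 := by
  rcases eq_or_ne a 0 with rfl | ha
  · rw [if_neg (zero_notMem_powerResidues _)]
    exact sum_eq_zero fun k _ => MulChar.map_zero _
  lift a to Fˣ using ha.isUnit
  have hmem := mulChar_apply_eq_one_iff_mem_powerResidues χ a
  simp only [MulChar.pow_apply_coe]
  by_cases h : χ a = 1
  · simp [if_pos (hmem.1 h), h]
  · rw [if_neg (mt hmem.2 h)]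
    refine (mul_eq_zero.1 ?_).resolve_right (sub_ne_zero.2 h)
    rw [geom_sum_mul, ← MulChar.pow_apply_coe, pow_orderOf_eq_one, MulChar.one_apply_coe, sub_self]

/-- The Gaussian period of exponent `n` attached to an additive character `ψ`, i.e. the sum of `ψ`
over the nonzero `n`-th powers. -/
def gaussPeriod {F R : Type*} [Field F] [Fintype F] [DecidableEq F] [CommRing R] (n : ℕ)
    (ψ : AddChar F R) : R :=
  ∑ a ∈ powerResidues F n, ψ a

theorem sum_gaussSum_pow (χ : MulChar F R) (ψ : AddChar F R) :
    ∑ k ∈ range (orderOf χ), gaussSum (χ ^ k) ψ = orderOf χ * gaussPeriod (orderOf χ) ψ := by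
  simp only [gaussSum, gaussPeriod]
  rw [sum_comm]
  simp only [← sum_mul, sum_mulChar_pow_apply, ite_mul, zero_mul, sum_ite_mem, univ_inter, mul_sum]

theorem norm_gaussPeriod_le (n : ℕ) (ψ : AddChar F ℂ) : ‖gaussPeriod n ψ‖ ≤ Fintype.card F :=
  (norm_sum_le _ _).trans (by simpa using card_le_univ _)

end PowerResidues

section JacobiSum

theorem one_sub_dvd_one_sub_mulChar_apply {F R : Type*} [Field F] [Finite F] [CommRing R]
    [IsDomain R] {χ : MulChar F R} {n : ℕ} [NeZero n] (hχ : χ ^ n = 1) {μ : R}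
    (hμ : IsPrimitiveRoot μ n) {x : F} (hx : x ≠ 0) : 1 - μ ∣ 1 - χ x := by
  obtain ⟨k, -, hk⟩ := MulChar.exists_apply_eq_pow hχ hμ hx
  rw [hk]
  exact one_sub_dvd_one_sub_pow μ k

theorem conj_jacobiSum {F : Type*} [Field F] [Fintype F] (χ φ : MulChar F ℂ) :
    starRingEnd ℂ (jacobiSum χ φ) = jacobiSum χ⁻¹ φ⁻¹ := by
  simp only [jacobiSum, map_sum, map_mul, starRingEnd_apply, MulChar.star_apply']

variable {F R : Type*} [Field F] [Fintype F] [CommRing R] [IsDomain R]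

theorem jacobiSum_add_card {χ φ : MulChar F R} (hχ : χ ≠ 1) (hφ : φ ≠ 1) :
    jacobiSum χ φ + Fintype.card F = ∑ x, (1 - χ x) * (1 - φ (1 - x)) := by
  have hφ' : ∑ x, φ (1 - x) = 0 := by
    rw [← MulChar.sum_eq_zero_of_ne_one hφ]
    exact (Equiv.subLeft (1 : F)).sum_comp φ
  simp only [sub_mul, mul_sub, one_mul, mul_one, sum_sub_distrib, hφ',
    MulChar.sum_eq_zero_of_ne_one hχ, jacobiSum, sum_const, card_univ, nsmul_eq_mul]
  ring

theorem mul_one_sub_dvd_jacobiSum_add_card {χ φ : MulChar F R} {m n : ℕ} [NeZero m] [NeZero n]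
    (hχ : χ ≠ 1) (hφ : φ ≠ 1) (hχm : χ ^ m = 1) (hφn : φ ^ n = 1) {μ ν : R}
    (hμ : IsPrimitiveRoot μ m) (hν : IsPrimitiveRoot ν n) :
    (1 - μ) * (1 - ν) ∣ jacobiSum χ φ + Fintype.card F := by
  rw [jacobiSum_add_card hχ hφ]
  refine dvd_sum fun x _ => ?_
  rcases eq_or_ne x 0 with rfl | hx₀
  · simp
  rcases eq_or_ne x 1 with rfl | hx₁
  · simp
  exact mul_dvd_mul (one_sub_dvd_one_sub_mulChar_apply hχm hμ hx₀)
    (one_sub_dvd_one_sub_mulChar_apply hφn hν (sub_ne_zero.2 hx₁.symm))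

end JacobiSum

section QuarticGaussSum

variable {F R : Type*} [Field F] [Fintype F] [CommRing R] [IsDomain R]

theorem gaussSum_mul_gaussSum_inv {χ : MulChar F R} (hχ : χ ≠ 1) (hneg : χ (-1) = 1)
    {ψ : AddChar F R} (hψ : ψ.IsPrimitive) :
    gaussSum χ ψ * gaussSum χ⁻¹ ψ = Fintype.card F := by
  rw [← gaussSum_mul_gaussSum_eq_card hχ hψ, ← mul_gaussSum_inv_eq_gaussSum χ⁻¹ ψ,
    MulChar.inv_apply', inv_neg_one, hneg, one_mul]

theorem gaussSum_sq_pow_two_of_orderOf_eq_four {χ : MulChar F R} (hχ : orderOf χ = 4)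
    (hneg : χ (-1) = 1) {ψ : AddChar F R} (hψ : ψ.IsPrimitive) :
    gaussSum (χ ^ 2) ψ ^ 2 = Fintype.card F := by
  have hne : χ ^ 2 ≠ 1 := pow_ne_one_of_lt_orderOf two_ne_zero (by rw [hχ]; norm_num)
  have hquad : (χ ^ 2).IsQuadratic := MulChar.isQuadratic_iff_sq_eq_one.2 <| by
    rw [← pow_mul]
    exact (hχ ▸ pow_orderOf_eq_one χ : χ ^ 4 = 1)
  rw [gaussSum_sq hne hquad hψ, MulChar.pow_apply' _ two_ne_zero, hneg, one_pow, one_mul]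

theorem gaussSum_sq_of_orderOf_eq_four {χ : MulChar F R} (hχ : orderOf χ = 4) (hneg : χ (-1) = 1)
    (hF : (Fintype.card F : R) ≠ 0) {ψ : AddChar F R} (hψ : ψ.IsPrimitive) :
    gaussSum χ ψ ^ 2 = jacobiSum χ (χ ^ 2) * gaussSum (χ ^ 2) ψ := by
  have hχ4 : χ ^ 4 = 1 := hχ ▸ pow_orderOf_eq_one χ
  have hne₁ : χ ≠ 1 := fun h => by simp [h] at hχ
  have hinv : χ * χ ^ 2 = χ⁻¹ := eq_inv_of_mul_eq_one_left (by rw [← pow_succ', ← pow_succ, hχ4])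
  have hjacobi : gaussSum χ⁻¹ ψ * jacobiSum χ (χ ^ 2) = gaussSum χ ψ * gaussSum (χ ^ 2) ψ := by
    rw [← hinv]
    exact jacobiSum_mul_nontrivial (hinv ▸ inv_ne_one.2 hne₁) ψ
  have hcard := gaussSum_mul_gaussSum_inv hne₁ hneg hψ
  have hsq := gaussSum_sq_pow_two_of_orderOf_eq_four hχ hneg hψ
  refine mul_left_cancel₀ hF ?_
  linear_combination (-gaussSum χ ψ ^ 2) * hsq - gaussSum χ ψ * gaussSum (χ ^ 2) ψ * hjacobi
    + gaussSum (χ ^ 2) ψ * jacobiSum χ (χ ^ 2) * hcard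

theorem sq_gaussSum_add_gaussSum_inv {χ : MulChar F R} (hχ : orderOf χ = 4) (hneg : χ (-1) = 1)
    (hF : (Fintype.card F : R) ≠ 0) {ψ : AddChar F R} (hψ : ψ.IsPrimitive) :
    (gaussSum χ ψ + gaussSum χ⁻¹ ψ) ^ 2 = 2 * Fintype.card F
      + (jacobiSum χ (χ ^ 2) + jacobiSum χ⁻¹ (χ ^ 2)⁻¹) * gaussSum (χ ^ 2) ψ := by
  have hne₁ : χ ≠ 1 := fun h => by simp [h] at hχ
  have hsq₂ : (χ ^ 2)⁻¹ = χ ^ 2 := by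
    rw [inv_eq_iff_mul_eq_one, ← pow_add]
    exact (hχ ▸ pow_orderOf_eq_one χ : χ ^ 4 = 1)
  have hg := gaussSum_sq_of_orderOf_eq_four hχ hneg hF hψ
  have hg' := gaussSum_sq_of_orderOf_eq_four (χ := χ⁻¹) (by rwa [orderOf_inv])
    (by rw [MulChar.inv_apply', inv_neg_one, hneg]) hF hψ
  rw [inv_pow] at hg'
  rw [hsq₂] at hg' ⊢
  linear_combination hg + hg' + 2 * gaussSum_mul_gaussSum_inv hne₁ hneg hψ

end QuarticGaussSum

section GeneralizedFermatPrime

open GaussianInt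

theorem sq_eq_one_of_sq_add_sq_eq_sq_add_one {p : ℕ} (hp : p.Prime) {s a b : ℤ}
    (hs : (p : ℤ) = s ^ 2 + 1) (hab : a ^ 2 + b ^ 2 = p) (hs_even : Even s) (ha : Odd a) :
    a ^ 2 = 1 := by
  have hp₀ : (p : ℤ) ≠ 0 := mod_cast hp.ne_zero
  -- Brahmagupta: `(a s - b)² + (a + b s)² = p²`, so if `p ∣ a s - b` one of the squares vanishes.
  have key : ∀ c : ℤ, a ^ 2 + c ^ 2 = p → (p : ℤ) ∣ a * s - c → a ^ 2 = 1 := by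
    rintro c hac ⟨k, hk⟩
    have hbrahm : (a * s - c) ^ 2 + (a + c * s) ^ 2 = p ^ 2 := by
      linear_combination (s ^ 2 + 1) * hac - p * hs
    have hadd_ne : a + c * s ≠ 0 := fun h => by
      have := hs_even.mul_left c
      grind
    have hk₀ : k = 0 := by
      have : (p : ℤ) ^ 2 * k ^ 2 < p ^ 2 * 1 := by
        have := pow_pos (abs_pos.2 hadd_ne) 2
        rw [sq_abs] at this
        rw [hk] at hbrahm
        linarith
      have := lt_of_mul_lt_mul_left this (sq_nonneg _)
      exact pow_eq_zero_iff two_ne_zero |>.1 (by nlinarith [sq_nonneg k])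
    rw [hk₀, mul_zero, sub_eq_zero] at hk
    refine mul_left_cancel₀ hp₀ ?_
    rw [← hk] at hac
    linear_combination hac + a ^ 2 * hs
  have hdvd : (p : ℤ) ∣ (a * s - b) * (a * s - -b) :=
    ⟨a ^ 2 - 1, by linear_combination (-a ^ 2) * hs - hab⟩
  rcases (Nat.prime_iff_prime_int.1 hp).dvd_or_dvd hdvd with h | h
  · exact key b hab h
  · exact key (-b) (by rwa [neg_sq]) h

theorem eq_neg_one_of_sq_add_sq_eq_pow_four_add_one {p t : ℕ} [Fact p.Prime]
    (hp : p = t ^ 4 + 1) (ht : Even t) {a b : ℤ} (hab : a ^ 2 + b ^ 2 = p) (heven : Even (a + p))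
    (hfour : 4 ∣ a + p + b) : a = -1 := by
  have hp' : (p : ℤ) = ((t : ℤ) ^ 2) ^ 2 + 1 := by rw [hp]; push_cast; ring
  have hs : (4 : ℤ) ∣ (t : ℤ) ^ 2 := mod_cast pow_dvd_pow_of_dvd ht.two_dvd 2
  have hs_even : Even ((t : ℤ) ^ 2) := even_iff_two_dvd.2 ((by norm_num : (2 : ℤ) ∣ 4).trans hs)
  have hp_mod : (4 : ℤ) ∣ p - 1 := by
    rw [hp', add_sub_cancel_right]
    exact hs.trans (dvd_pow_self _ two_ne_zero)
  have ha : Odd a := by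
    rw [Int.even_iff] at heven
    rw [Int.odd_iff]
    omega
  have ha_sq : a ^ 2 = 1 :=
    sq_eq_one_of_sq_add_sq_eq_sq_add_one Fact.out hp' hab hs_even ha
  have hb : (4 : ℤ) ∣ b := by
    have hb_sq : b ^ 2 = ((t : ℤ) ^ 2) ^ 2 := by linear_combination hab - ha_sq + hp'
    rcases sq_eq_sq_iff_eq_or_eq_neg.1 hb_sq with h | h <;> simpa [h] using hs
  rcases sq_eq_one_iff.1 ha_sq with h | h
  · omega
  · exact h

theorem even_re_and_four_dvd_re_add_im_of_dvd {z : GaussianInt}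
    (hz : (1 - ⟨0, 1⟩) * (1 - -1) ∣ z) : Even z.re ∧ 4 ∣ z.re + z.im := by
  obtain ⟨⟨c, d⟩, rfl⟩ := hz
  simp only [Zsqrtd.re_mul, Zsqrtd.im_mul, Zsqrtd.re_sub, Zsqrtd.im_sub, Zsqrtd.re_neg,
    Zsqrtd.im_neg, Zsqrtd.re_one, Zsqrtd.im_one]
  exact ⟨⟨c + d, by ring⟩, ⟨d, by ring⟩⟩

theorem isPrimitiveRoot_gaussianInt_I : IsPrimitiveRoot (⟨0, 1⟩ : GaussianInt) 4 :=
  IsPrimitiveRoot.of_map_of_injective (f := toComplex)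
    (by simpa [toComplex_def] using Complex.isPrimitiveRoot_I) toComplex_injective

theorem norm_jacobiSum_gaussianInt {p : ℕ} [Fact p.Prime] {χ φ : MulChar (ZMod p) GaussianInt}
    (hχ : χ ≠ 1) (hφ : φ ≠ 1) (hχφ : χ * φ ≠ 1) : (jacobiSum χ φ).norm = p := by
  have hinj := toComplex_injective
  have h := jacobiSum_mul_jacobiSum_inv (F := ZMod p) (F' := ℂ)
    (by rw [ringChar.eq_zero, ZMod.ringChar_zmod_n]; exact (Fact.out : p.Prime).ne_zero.symm)
    ((MulChar.ringHomComp_ne_one_iff hinj).2 hχ) ((MulChar.ringHomComp_ne_one_iff hinj).2 hφ)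
    (by rwa [← MulChar.ringHomComp_mul, MulChar.ringHomComp_ne_one_iff hinj])
  rw [← conj_jacobiSum, jacobiSum_ringHomComp, Complex.mul_conj, ← intCast_complex_norm,
    ZMod.card] at h
  exact_mod_cast h

variable {p t : ℕ} [Fact p.Prime]

theorem re_jacobiSum_of_orderOf_eq_four (hp : p = t ^ 4 + 1) (ht : Even t)
    {χ : MulChar (ZMod p) GaussianInt} (hχ : orderOf χ = 4) : (jacobiSum χ (χ ^ 2)).re = -1 := by
  have hχ4 : χ ^ 4 = 1 := hχ ▸ pow_orderOf_eq_one χ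
  have hne₁ : χ ≠ 1 := fun h => by simp [h] at hχ
  have hne₂ : χ ^ 2 ≠ 1 := pow_ne_one_of_lt_orderOf two_ne_zero (by rw [hχ]; norm_num)
  have hne₃ : χ * χ ^ 2 ≠ 1 := by
    rw [← pow_succ']
    exact pow_ne_one_of_lt_orderOf (by norm_num) (by rw [hχ]; norm_num)
  have hnorm := norm_jacobiSum_gaussianInt hne₁ hne₂ hne₃
  rw [Zsqrtd.norm_def] at hnorm
  have hdvd := mul_one_sub_dvd_jacobiSum_add_card hne₁ hne₂ hχ4
    (by rw [← pow_mul, hχ4] : (χ ^ 2) ^ 2 = 1) isPrimitiveRoot_gaussianInt_I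
    (IsPrimitiveRoot.neg_one 0 (by norm_num))
  rw [ZMod.card] at hdvd
  obtain ⟨heven, hfour⟩ := even_re_and_four_dvd_re_add_im_of_dvd hdvd
  rw [Zsqrtd.re_add, Zsqrtd.re_natCast] at heven hfour
  rw [Zsqrtd.im_add, Zsqrtd.im_natCast, add_zero] at hfour
  exact eq_neg_one_of_sq_add_sq_eq_pow_four_add_one hp ht (by linear_combination hnorm) heven hfour

theorem mulChar_neg_one_eq_one_of_eq_pow_four_add_one {R : Type*} [CommRing R]
    (hp : p = t ^ 4 + 1) {χ : MulChar (ZMod p) R} (hχ : orderOf χ = 4) : χ (-1) = 1 := by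
  have ht : (-1 : ZMod p) = (t : ZMod p) ^ 4 := by
    have : ((t ^ 4 + 1 : ℕ) : ZMod p) = 0 := by rw [← hp, ZMod.natCast_self]
    push_cast at this
    exact (eq_neg_of_add_eq_zero_left this).symm
  have ht₀ : IsUnit (t : ZMod p) := isUnit_pow_iff four_ne_zero |>.1 (ht ▸ isUnit_one.neg)
  rw [ht, map_pow, ← MulChar.pow_apply' _ four_ne_zero, ← hχ, pow_orderOf_eq_one,
    MulChar.one_apply ht₀]

theorem exists_sq_four_mul_gaussPeriod_four_add_one_sub (hp : p = t ^ 4 + 1) (ht : Even t)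
    {ψ : AddChar (ZMod p) ℂ} (hψ : ψ ≠ 1) :
    ∃ r : ℂ, r ^ 2 = p ∧ (4 * gaussPeriod 4 ψ + 1 - r) ^ 2 = 2 * (p - r) := by
  have hprim := AddChar.IsPrimitive.of_ne_one hψ
  have hcard : Fintype.card (ZMod p) = p := ZMod.card p
  have h4 : 4 ∣ Fintype.card (ZMod p) - 1 := by
    obtain ⟨u, rfl⟩ := ht.two_dvd
    exact ⟨4 * u ^ 4, by rw [hcard]; grind⟩
  obtain ⟨χ₀, hχ₀⟩ := MulChar.exists_mulChar_orderOf (ZMod p) h4 isPrimitiveRoot_gaussianInt_I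
  let χ : MulChar (ZMod p) ℂ := χ₀.ringHomComp toComplex
  have hχ : orderOf χ = 4 := hχ₀ ▸ orderOf_injective (MulChar.ringHomCompHom toComplex)
    (MulChar.injective_ringHomComp toComplex_injective) χ₀
  have hjacobi : jacobiSum χ (χ ^ 2) + jacobiSum χ⁻¹ (χ ^ 2)⁻¹ = -2 := by
    rw [← conj_jacobiSum, Complex.add_conj, MulChar.ringHomComp_pow, jacobiSum_ringHomComp,
      ← intCast_re, re_jacobiSum_of_orderOf_eq_four hp ht hχ₀]
    norm_num
  have hsq := sq_gaussSum_add_gaussSum_inv hχ (mulChar_neg_one_eq_one_of_eq_pow_four_add_one hp hχ)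
    (by rw [hcard]; exact_mod_cast (Fact.out : p.Prime).ne_zero) hprim
  refine ⟨gaussSum (χ ^ 2) ψ, ?_, ?_⟩
  · rw [gaussSum_sq_pow_two_of_orderOf_eq_four hχ
      (mulChar_neg_one_eq_one_of_eq_pow_four_add_one hp hχ) hprim, hcard]
  · have hinv : χ ^ 3 = χ⁻¹ := eq_inv_of_mul_eq_one_left (by
      rw [← pow_succ]; exact (hχ ▸ pow_orderOf_eq_one χ : χ ^ 4 = 1))
    have hsum := sum_gaussSum_pow χ ψ
    rw [hχ, sum_range_succ, sum_range_succ, sum_range_succ, sum_range_one, pow_zero, pow_one, hinv,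
      gaussSum_one_left hψ] at hsum
    rw [hcard, hjacobi] at hsq
    push_cast at hsum
    have : 4 * gaussPeriod 4 ψ + 1 - gaussSum (χ ^ 2) ψ = gaussSum χ ψ + gaussSum χ⁻¹ ψ := by
      linear_combination -hsum
    rw [this, hsq]
    ring

theorem exists_ofReal_eq_of_sq_eq {z : ℂ} {x : ℝ} (hx : 0 ≤ x) (hz : z ^ 2 = x) :
    ∃ y : ℝ, y ^ 2 = x ∧ z = y := by
  have hsqrt : z ^ 2 = (√x : ℂ) ^ 2 := by rw [hz, ← Complex.ofReal_pow, Real.sq_sqrt hx]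
  rcases sq_eq_sq_iff_eq_or_eq_neg.1 hsqrt with h | h
  · exact ⟨√x, Real.sq_sqrt hx, h⟩
  · exact ⟨-√x, by rw [neg_sq, Real.sq_sqrt hx], by rw [h, Complex.ofReal_neg]⟩

theorem exists_gaussPeriod_four_eq (hp : p = t ^ 4 + 1) (ht : Even t)
    {ψ : AddChar (ZMod p) ℂ} (hψ : ψ ≠ 1) :
    ∃ r d : ℝ, r ^ 2 = p ∧ d ^ 2 = 2 * (p - r) ∧ gaussPeriod 4 ψ = ((-1 + r + d) / 4 : ℝ) := by
  obtain ⟨r, hr, hd⟩ := exists_sq_four_mul_gaussPeriod_four_add_one_sub hp ht hψ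
  obtain ⟨r, hr', rfl⟩ := exists_ofReal_eq_of_sq_eq (x := p) p.cast_nonneg (mod_cast hr)
  have hr_le : r ≤ p := by
    have : (1 : ℝ) ≤ p := mod_cast (Fact.out : p.Prime).one_le
    nlinarith
  obtain ⟨d, hd, hηd⟩ := exists_ofReal_eq_of_sq_eq (x := 2 * (p - r)) (by linarith)
    (by push_cast; exact hd)
  refine ⟨r, d, hr', hd, ?_⟩
  push_cast
  linear_combination hηd / 4

theorem four_mul_norm_gaussPeriod_four_le (hp : p = t ^ 4 + 1) (ht : Even t)
    {ψ : AddChar (ZMod p) ℂ} (hψ : ψ ≠ 1) : 4 * ‖gaussPeriod 4 ψ‖ ≤ 3 * t ^ 2 + 4 := by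
  obtain ⟨r, d, hr, hd, hη⟩ := exists_gaussPeriod_four_eq hp ht hψ
  have hp' : (p : ℝ) = t ^ 4 + 1 := mod_cast hp
  have hr_le : |r| ≤ t ^ 2 + 1 := abs_le_of_sq_le_sq (by rw [hr, hp']; nlinarith) (by positivity)
  have hd_le : |d| ≤ 2 * (t ^ 2 + 1) :=
    abs_le_of_sq_le_sq (by rw [hd, hp']; nlinarith [neg_abs_le r]) (by positivity)
  rw [hη, Complex.norm_real, Real.norm_eq_abs, abs_div, abs_of_pos (four_pos : (0 : ℝ) < 4)]
  grind

end GeneralizedFermatPrime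

section BernoulliFourierSeries

theorem hasSum_cos_div_pow_four {x : ℝ} (hx : x ∈ Set.Icc (0 : ℝ) 1) :
    HasSum (fun n : ℕ => Real.cos (2 * Real.pi * n * x) / n ^ 4)
      (Real.pi ^ 4 / 3 * (1 / 30 - (x * (1 - x)) ^ 2)) := by
  have hB₄ : (Polynomial.map (algebraMap ℚ ℝ) (Polynomial.bernoulli 4)).eval x
      = (x * (1 - x)) ^ 2 - 1 / 30 := by
    have h₃ : bernoulli 3 = 0 := bernoulli_eq_zero_of_odd (by decide) (by norm_num)
    have h₄ : bernoulli 4 = -1 / 30 := by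
      rw [bernoulli_eq_bernoulli'_of_ne_one (by norm_num), bernoulli'_four]
    simp [Polynomial.bernoulli, sum_range_succ, h₃, h₄, Nat.choose]
    ring
  convert hasSum_one_div_nat_pow_mul_cos two_ne_zero hx using 1
  · ext n
    ring_nf
  · rw [hB₄]
    simp only [Nat.factorial]
    push_cast
    ring

/-- The integer `N ^ 4 * (B₄(c / N) + 1 / 30)`, where `B₄` is the fourth Bernoulli polynomial and
`c ≤ N` (otherwise the subtraction truncates). It makes Fourier sums over residues modulo `N`
computable in `ℕ`. -/
def bernoulliFourWeight (N c : ℕ) : ℕ :=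
  (c * (N - c)) ^ 2

theorem hasSum_re_stdAddChar_div_pow_four {N : ℕ} [NeZero N] (a : ZMod N) :
    HasSum (fun n : ℕ => (ZMod.stdAddChar ((n : ZMod N) * a) : ℂ).re / n ^ 4)
      (Real.pi ^ 4 / 3 * (1 / 30 - bernoulliFourWeight N a.val / N ^ 4)) := by
  have hN : (N : ℝ) ≠ 0 := Nat.cast_ne_zero.2 (NeZero.ne N)
  have hx : (a.val / N : ℝ) ∈ Set.Icc (0 : ℝ) 1 :=
    ⟨by positivity, div_le_one_of_le₀ (mod_cast a.val_lt.le) (by positivity)⟩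
  convert hasSum_cos_div_pow_four hx using 1
  · ext n
    have h := ZMod.stdAddChar_coe (N := N) (n * a.val : ℤ)
    push_cast at h
    rw [ZMod.natCast_zmod_val] at h
    rw [h, ← Complex.exp_ofReal_mul_I_re]
    push_cast
    ring_nf
  · rw [bernoulliFourWeight]
    push_cast [Nat.cast_sub a.val_lt.le]
    field_simp

theorem abs_sub_le_of_hasSum_div_pow_four {f : ℕ → ℝ} {C V : ℝ}
    (hV : HasSum (fun n : ℕ => f n / n ^ 4) V) (hf : ∀ n, 2 ≤ n → |f n| ≤ C * n ^ 2) :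
    |V - f 1| ≤ C * (Real.pi ^ 2 / 6 - 1) := by
  refine (hV.sub (hasSum_ite_eq 1 (f 1))).norm_le_of_bounded
    ((hasSum_zeta_two.sub (hasSum_ite_eq 1 1)).mul_left C) fun n => ?_
  rcases lt_or_ge n 2 with hn | hn
  · interval_cases n <;> simp
  · have hn₁ : n ≠ 1 := by omega
    have hn₀ : (0 : ℝ) < n := by positivity
    rw [if_neg hn₁, if_neg hn₁, sub_zero, sub_zero, Real.norm_eq_abs, abs_div,
      abs_of_pos (pow_pos hn₀ 4), div_le_iff₀ (pow_pos hn₀ 4)]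
    refine (hf n hn).trans_eq ?_
    field_simp

end BernoulliFourierSeries

section BinarySummation

/-- The sum of `f` over the block `[a, a + 2 ^ k)`, computed by halving the block. -/
def dyadicSum (f : ℕ → ℕ) : ℕ → ℕ → ℕ
  | 0, a => f a
  | k + 1, a => dyadicSum f k a + dyadicSum f k (a + 2 ^ k)

theorem dyadicSum_eq_sum_range (f : ℕ → ℕ) (k a : ℕ) :
    dyadicSum f k a = ∑ i ∈ range (2 ^ k), f (a + i) := by
  induction k generalizing a with
  | zero => simp [dyadicSum]
  | succ k ih => simp only [dyadicSum, ih, pow_succ, mul_two, sum_range_add, add_assoc]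

end BinarySummation

section PeriodZMod

theorem sum_units_zmod {p : ℕ} [Fact p.Prime] {M : Type*} [AddCommMonoid M] (f : ZMod p → M) :
    ∑ x : (ZMod p)ˣ, f x = ∑ i ∈ Ico 1 p, f i := by
  refine sum_nbij (fun x => (x : ZMod p).val) (fun x _ => mem_Ico.2
    ⟨Nat.pos_of_ne_zero ((ZMod.val_ne_zero _).2 x.ne_zero), ZMod.val_lt _⟩)
    (fun x _ y _ h => Units.ext (ZMod.val_injective p h)) (fun i hi => ?_)
    fun x _ => by rw [ZMod.natCast_zmod_val]
  obtain ⟨hi₁, hi₂⟩ := mem_Ico.1 (mem_coe.1 hi)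
  have hval : (i : ZMod p).val = i := ZMod.val_natCast_of_lt hi₂
  have hi₀ : (i : ZMod p) ≠ 0 := (ZMod.val_ne_zero _).1 (by omega)
  exact ⟨Units.mk0 _ hi₀, mem_coe.2 (mem_univ _), hval⟩

theorem sum_powerResidues_zmod_eq_of_dyadicSum_eq {p n k S : ℕ} [Fact p.Prime] (hn₀ : 0 < n)
    (hn : n ∣ p - 1) (hk : p - 1 = 2 ^ k) {f : ℕ → ℕ}
    (hS : dyadicSum (fun x => f (x ^ n % p)) k 1 = n * S) :
    ∑ a ∈ powerResidues (ZMod p) n, f a.val = S := by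
  refine Nat.eq_of_mul_eq_mul_left hn₀ ?_
  rw [← hS, ← smul_eq_mul, ← sum_units_comp_pow (by rwa [ZMod.card]),
    sum_units_zmod fun x => f (x ^ n).val, sum_Ico_eq_sum_range, hk, dyadicSum_eq_sum_range]
  simp only [← Nat.cast_pow, ZMod.val_natCast]

theorem hasSum_re_gaussPeriod_div_pow_four {p : ℕ} [Fact p.Prime] (k : ℕ) :
    HasSum (fun n : ℕ => (gaussPeriod k ((ZMod.stdAddChar (N := p)).mulShift n)).re / n ^ 4)
      (Real.pi ^ 4 / 3 * (#(powerResidues (ZMod p) k) / 30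
        - (∑ a ∈ powerResidues (ZMod p) k, bernoulliFourWeight p a.val : ℕ) / p ^ 4)) := by
  convert hasSum_sum fun a (_ : a ∈ powerResidues (ZMod p) k) =>
    hasSum_re_stdAddChar_div_pow_four a using 1
  · ext n
    rw [gaussPeriod, Complex.re_sum, sum_div]
    rfl
  · rw [← mul_sum, sum_sub_distrib, sum_const, nsmul_eq_mul, mul_one_div, ← sum_div, Nat.cast_sum]

theorem stdAddChar_eq_exp_pow_val {N : ℕ} [NeZero N] (a : ZMod N) :
    (ZMod.stdAddChar a : ℂ) = Complex.exp (2 * Real.pi * Complex.I / N) ^ a.val := by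
  rw [ZMod.stdAddChar_apply, ZMod.toCircle_apply, ← Complex.exp_nat_mul]
  ring_nf

end PeriodZMod

section Period65537

theorem fact_prime_65537 : Fact (Nat.Prime 65537) := ⟨by norm_num⟩

attribute [local instance] fact_prime_65537

theorem sum_bernoulliFourWeight_fourthPowers_65537 :
    ∑ a ∈ powerResidues (ZMod 65537) 4, bernoulliFourWeight 65537 a.val
      = 10092218517277700625856 :=
  sum_powerResidues_zmod_eq_of_dyadicSum_eq (k := 16) four_pos (by norm_num) (by norm_num)
    (by decide +kernel)

theorem card_fourthPowers_65537 : #(powerResidues (ZMod 65537) 4) = 16384 := by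
  have h := mul_card_powerResidues (F := ZMod 65537) (n := 4) (by rw [ZMod.card]; norm_num)
  rw [ZMod.card] at h
  omega

theorem abs_re_gaussPeriod_four_mulShift_le {n : ℕ} (hn : 2 ≤ n) :
    |(gaussPeriod 4 ((ZMod.stdAddChar (N := 65537)).mulShift n)).re| ≤ 49 * n ^ 2 := by
  have hn₂ : (2 : ℝ) ≤ n := mod_cast hn
  refine (Complex.abs_re_le_norm _).trans ?_
  rcases eq_or_ne (n : ZMod 65537) 0 with h | h
  · have hle : (65537 : ℝ) ≤ n :=
      mod_cast Nat.le_of_dvd (by omega) ((ZMod.natCast_eq_zero_iff _ _).1 h)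
    refine (norm_gaussPeriod_le _ _).trans ?_
    rw [ZMod.card]
    push_cast
    nlinarith
  · have hperiod := four_mul_norm_gaussPeriod_four_le (p := 65537) (t := 16) (by norm_num)
      (by decide) (ZMod.isPrimitive_stdAddChar 65537 h)
    push_cast at hperiod
    nlinarith

theorem re_gaussPeriod_four_stdAddChar_mem_Ioo :
    (gaussPeriod 4 (ZMod.stdAddChar (N := 65537))).re ∈ Set.Ioo (-63 : ℝ) 7 := by
  have htail := abs_sub_le_of_hasSum_div_pow_four (hasSum_re_gaussPeriod_div_pow_four 4)
    fun n hn => abs_re_gaussPeriod_four_mulShift_le hn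
  rw [card_fourthPowers_65537, sum_bernoulliFourWeight_fourthPowers_65537, Nat.cast_one,
    AddChar.mulShift_one, abs_le] at htail
  have hπ₄ : 3 ^ 4 < Real.pi ^ 4 := by gcongr; exact Real.pi_gt_three
  have hπ₄' : Real.pi ^ 4 < 3.15 ^ 4 := by gcongr; exact Real.pi_lt_d2
  have hπ₂ : Real.pi ^ 2 < 3.15 ^ 2 := by gcongr; exact Real.pi_lt_d2
  obtain ⟨hlower, hupper⟩ := htail
  norm_num at hlower hupper hπ₄ hπ₄' hπ₂
  constructor <;> linarith

theorem nonneg_and_nonpos_of_mem_Ioo {r d : ℝ} (hr : r ^ 2 = 65537) (hd : d ^ 2 = 2 * (65537 - r))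
    (hrd : (-1 + r + d) / 4 ∈ Set.Ioo (-63 : ℝ) 7) : 0 ≤ r ∧ d ≤ 0 := by
  obtain ⟨hlower, hupper⟩ := hrd
  have hr_le : r ≤ 257 := by nlinarith
  have hr_ge : -257 ≤ r := by nlinarith
  have hd_ge : 361 ≤ |d| := by
    rw [← abs_of_pos (by norm_num : (0 : ℝ) < 361), ← sq_le_sq, hd]
    linarith
  have hr₀ : 0 ≤ r := by
    by_contra! hr_neg
    have hr_lt : r < -256 := by nlinarith
    rcases le_abs.1 hd_ge with hd_pos | hd_neg <;> linarith
  refine ⟨hr₀, ?_⟩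
  have hr_gt : 256 < r := by nlinarith
  by_contra! hd_pos
  rw [abs_of_pos hd_pos] at hd_ge
  linarith

end Period65537

/-- Let `ζ = exp (2 π i / 65537)`, let `H = {x ^ 4 : x ∈ (ZMod 65537)ˣ}` be
the subgroup of fourth powers mod `65537` and `η₀ = ∑_{a ∈ H} ζ ^ a` the corresponding quartic
Gaussian period. Then `η₀` is real and `η₀ = (A - √(A ^ 2 + 16384)) / 2`, where
`A = (-1 + √65537) / 2`. -/
theorem stmt13 (A : ℝ) (hA : A = (-1 + Real.sqrt 65537) / 2) :
    (∑ a ∈ Finset.image (fun x : (ZMod 65537)ˣ => (x : ZMod 65537) ^ 4) Finset.univ,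
        Complex.exp (2 * Real.pi * Complex.I / 65537) ^ a.val) =
      (((A - Real.sqrt (A ^ 2 + 16384)) / 2 : ℝ) : ℂ) := by
  have := fact_prime_65537
  have hsum : (∑ a ∈ Finset.image (fun x : (ZMod 65537)ˣ => (x : ZMod 65537) ^ 4) Finset.univ,
      Complex.exp (2 * Real.pi * Complex.I / 65537) ^ a.val)
        = gaussPeriod 4 (ZMod.stdAddChar (N := 65537)) :=
    sum_congr rfl fun a _ => by simp [stdAddChar_eq_exp_pow_val]
  obtain ⟨r, d, hr, hd, hη⟩ := exists_gaussPeriod_four_eq (p := 65537) (t := 16) (by norm_num)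
    (by decide) (by simpa using ZMod.isPrimitive_stdAddChar 65537 one_ne_zero)
  obtain ⟨hlower, hupper⟩ := re_gaussPeriod_four_stdAddChar_mem_Ioo
  rw [hη, Complex.ofReal_re] at hlower hupper
  push_cast at hr hd
  obtain ⟨hr₀, hd₀⟩ := nonneg_and_nonpos_of_mem_Ioo hr hd ⟨hlower, hupper⟩
  have hr_sqrt : √65537 = r := by rw [← hr, Real.sqrt_sq hr₀]
  have hd_sqrt : √(A ^ 2 + 16384) = -d / 2 := by
    rw [Real.sqrt_eq_iff_mul_self_eq (by positivity) (by linarith), hA, hr_sqrt]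
    linear_combination hr / 4 - hd / 4
  rw [hsum, hη, hd_sqrt, hA, hr_sqrt]
  push_cast
  ring
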